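/- arXiv:2003.12340 — 7 statements merged into one kernel-verified Lean document; each statement's English description precedes it below -/
import Mathlib

section
/- Let (α_n)_{n≥0} and (a_n)_{n≥0} be sequences with α_n ∈ (0,1/2) and a_n an integer with a_n ≥ 2, satisfying 1/α_n = a_n − α_{n+1} for all n ≥ 0, and let (u_n)_{n≥0} be positive reals such that (i) Σ_{n≥0} u_0 u_1 ⋯ u_n = +∞ and (ii) a_{n+1} ≥ a_n^{u_n a_n} + 1/2 for all n ≥ 0. Then the Brjuno sum diverges: Σ_{n≥0} β_{n−1} log(1/α_n) = +∞. -/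
open Filter

/-!
Since `x ↦ x ^ (u * x)` is increasing on `[1, ∞)` and `a n - 1 / 2 < 1 / α n < a n`, the growth
condition on `a` passes to `1 / α`: `(1 / α n) ^ (u n * (1 / α n)) ≤ 1 / α (n + 1)`. Taking
logarithms, `u n * log (1 / α n) ≤ α n * log (1 / α (n + 1))`, so each term of the Brjuno sum is at
least `u n` times the preceding one. The terms therefore dominate the products of the `u n`, up to
the positive factor `log (1 / α 0)`.
-/

theorem prod_range_mul_le_of_mul_le_succ {R : Type*} [CommSemiring R] [PartialOrder R]
    [IsOrderedRing R] {v b : ℕ → R} (hv : ∀ n, 0 ≤ v n) (h : ∀ n, v n * b n ≤ b (n + 1)) (n : ℕ) :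
    (∏ k ∈ Finset.range n, v k) * b 0 ≤ b n := by
  induction n with
  | zero => simp
  | succ n ih =>
    calc (∏ k ∈ Finset.range (n + 1), v k) * b 0
        = v n * ((∏ k ∈ Finset.range n, v k) * b 0) := by rw [Finset.prod_range_succ]; ring
      _ ≤ v n * b n := mul_le_mul_of_nonneg_left ih (hv n)
      _ ≤ b (n + 1) := h n

theorem tsum_eq_top_of_mul_le_succ {v b : ℕ → ENNReal} (hb : b 0 ≠ 0)
    (h : ∀ n, v n * b n ≤ b (n + 1))
    (hv : ∑' n, ∏ k ∈ Finset.range (n + 1), v k = ⊤) : ∑' n, b n = ⊤ := by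
  rw [eq_top_iff]
  calc ⊤ = (∑' n, ∏ k ∈ Finset.range (n + 1), v k) * b 0 := by rw [hv, ENNReal.top_mul hb]
    _ = ∑' n, (∏ k ∈ Finset.range (n + 1), v k) * b 0 := ENNReal.tsum_mul_right.symm
    _ ≤ ∑' n, b (n + 1) := ENNReal.tsum_le_tsum fun n ↦
        prod_range_mul_le_of_mul_le_succ (fun _ ↦ zero_le) h (n + 1)
    _ ≤ ∑' n, b n := ENNReal.tsum_comp_le_tsum_of_injective (add_left_injective 1) b

theorem rpow_mul_self_le_rpow_mul_self {x y u : ℝ} (hx : 1 ≤ x) (hxy : x ≤ y) (hu : 0 ≤ u) :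
    x ^ (u * x) ≤ y ^ (u * y) :=
  calc x ^ (u * x) ≤ x ^ (u * y) := by gcongr
    _ ≤ y ^ (u * y) := Real.rpow_le_rpow (by linarith) hxy (mul_nonneg hu (by linarith))

theorem one_div_rpow_le_one_div_succ {α a u : ℕ → ℝ} (hα : ∀ n, α n ∈ Set.Ioo 0 (1 / 2))
    (hrec : ∀ n, 1 / α n = a n - α (n + 1)) (hu : ∀ n, 0 ≤ u n)
    (hgrow : ∀ n, a n ^ (u n * a n) + 1 / 2 ≤ a (n + 1)) (n : ℕ) :
    (1 / α n) ^ (u n * (1 / α n)) ≤ 1 / α (n + 1) := by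
  have one_le : 1 ≤ 1 / α n := one_le_one_div (hα n).1 (by linarith [(hα n).2])
  have le_a : 1 / α n ≤ a n := by linarith [hrec n, (hα (n + 1)).1]
  calc (1 / α n) ^ (u n * (1 / α n)) ≤ a n ^ (u n * a n) :=
        rpow_mul_self_le_rpow_mul_self one_le le_a (hu n)
    _ ≤ a (n + 1) - 1 / 2 := by linarith [hgrow n]
    _ ≤ 1 / α (n + 1) := by linarith [hrec (n + 1), (hα (n + 2)).2]

theorem mul_log_one_div_le_of_rpow_le {x y u : ℝ} (hx : 0 < x)
    (h : (1 / x) ^ (u * (1 / x)) ≤ 1 / y) : u * Real.log (1 / x) ≤ x * Real.log (1 / y) :=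
  calc u * Real.log (1 / x) = x * (u * (1 / x) * Real.log (1 / x)) := by field_simp
    _ = x * Real.log ((1 / x) ^ (u * (1 / x))) := by rw [Real.log_rpow (by positivity)]
    _ ≤ x * Real.log (1 / y) := by gcongr

/-- The `n`-th term `β_{n-1} log (1 / α_n)` of the Brjuno sum of `α`, where
`β_{n-1} = α_0 ⋯ α_{n-1}`; the convention `β_{-1} = 1` is the empty product. -/
noncomputable def brjunoTerm (α : ℕ → ℝ) (n : ℕ) : ℝ :=
  (∏ k ∈ Finset.range n, α k) * Real.log (1 / α n)

theorem mul_brjunoTerm_le_brjunoTerm_succ {α : ℕ → ℝ} (hα : ∀ n, 0 < α n) {u : ℝ} {n : ℕ}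
    (h : (1 / α n) ^ (u * (1 / α n)) ≤ 1 / α (n + 1)) :
    u * brjunoTerm α n ≤ brjunoTerm α (n + 1) := by
  have hβ : 0 ≤ ∏ k ∈ Finset.range n, α k := Finset.prod_nonneg fun k _ ↦ (hα k).le
  calc u * brjunoTerm α n
      = (∏ k ∈ Finset.range n, α k) * (u * Real.log (1 / α n)) := mul_left_comm ..
    _ ≤ (∏ k ∈ Finset.range n, α k) * (α n * Real.log (1 / α (n + 1))) :=
        mul_le_mul_of_nonneg_left (mul_log_one_div_le_of_rpow_le (hα n) h) hβ
    _ = brjunoTerm α (n + 1) := by rw [brjunoTerm, Finset.prod_range_succ, mul_assoc]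

theorem brjunoTerm_zero_pos {α : ℕ → ℝ} (h0 : 0 < α 0) (h1 : α 0 < 1) : 0 < brjunoTerm α 0 := by
  simpa only [brjunoTerm, Finset.prod_range_zero, one_mul] using
    Real.log_pos (one_lt_one_div h0 h1)

theorem jagged_brjuno_sum_diverges_general {α u : ℕ → ℝ} (hα : ∀ n, 0 < α n) (hα0 : α 0 < 1)
    (hu : ∀ n, 0 ≤ u n)
    (hdiv : ∑' n, ENNReal.ofReal (∏ k ∈ Finset.range (n + 1), u k) = ⊤)
    (hgrow : ∀ n, (1 / α n) ^ (u n * (1 / α n)) ≤ 1 / α (n + 1)) :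
    ∑' n, ENNReal.ofReal (brjunoTerm α n) = ⊤ := by
  refine tsum_eq_top_of_mul_le_succ (v := fun n ↦ ENNReal.ofReal (u n))
    (ENNReal.ofReal_pos.mpr (brjunoTerm_zero_pos (hα 0) hα0)).ne' (fun n ↦ ?_) ?_
  · rw [← ENNReal.ofReal_mul (hu n)]
    exact ENNReal.ofReal_le_ofReal (mul_brjunoTerm_le_brjunoTerm_succ hα (hgrow n))
  · simpa only [ENNReal.ofReal_prod_of_nonneg fun k _ ↦ hu k] using hdiv

/-- Any jagged number has divergent Brjuno sum (is of non-Brjuno type). -/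
theorem jagged_brjuno_sum_diverges
    (α : ℕ → ℝ) (a : ℕ → ℤ) (u : ℕ → ℝ)
    (hα : ∀ n, α n ∈ Set.Ioo (0:ℝ) (1/2))
    (ha : ∀ n, 2 ≤ a n)
    (hrec : ∀ n, 1 / α n = (a n : ℝ) - α (n+1))
    (hu : ∀ n, 0 < u n)
    (hdiv : ∑' n, ENNReal.ofReal (∏ k ∈ Finset.range (n+1), u k) = ⊤)
    (hgrow : ∀ n, ((a n : ℝ)) ^ (u n * (a n : ℝ)) + 1/2 ≤ ((a (n+1) : ℤ) : ℝ)) :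
    ∑' n, ENNReal.ofReal ((∏ k ∈ Finset.range n, α k) * Real.log (1 / α n)) = ⊤ := by
  exact jagged_brjuno_sum_diverges_general (fun n ↦ (hα n).1) (by linarith [(hα 0).2])
    (fun n ↦ (hu n).le) hdiv (one_div_rpow_le_one_div_succ hα hrec (fun n ↦ (hu n).le) hgrow)
end

section
/- Let (α_n)_{n≥0} and (a_n)_{n≥0} be sequences with α_n ∈ (0,1/2) and a_n an integer with a_n ≥ 2, satisfying 1/α_n = a_n − α_{n+1} for all n ≥ 0. Suppose there are positive reals (v_n)_{n≥0} with v_n → +∞ and a uniformly bounded sequence of reals (η_n)_{n≥0} such that a_{n+1} = e^{v_n a_n} + η_n for all n ≥ 0, and Σ_{n≥1} v_n/(a_0 a_1 ⋯ a_{n−1}) < +∞. Then the Brjuno sum converges: Σ_{n≥0} β_{n−1} log(1/α_n) < +∞. -/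
open Filter

/-!
Since `v n → ∞`, the partial quotients `a n` eventually at least double at each step, so
`∑ 1 / a n` converges. As `1 / α n` stays within a bounded distance `D` of `a n`, also `∑ α n`
converges and `α n * a n ≤ 1 + D * α n`; multiplying, `β_{n-1} = α 0 ⋯ α (n-1)` is at most a
constant `K` times `1 / (a 0 ⋯ a (n-1))`. Finally `log (1 / α (n+1)) ≤ v n * a n + L` for a
constant `L`, once `v n ≥ 0`, so that `β_n * log (1 / α (n+1))` is eventually dominated by
`K * (1 + D) * (v n / (a 0 ⋯ a (n-1))) + L * α n`.
-/

lemma two_mul_le_exp_sub {C v x : ℝ} (hx : 1 ≤ x) (hv : 2 + |C| ≤ v) :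
    2 * x ≤ Real.exp (v * x) - C := by
  have hvx : (2 + |C|) * x ≤ v * x := by gcongr
  have hCx : |C| ≤ |C| * x := le_mul_of_one_le_right (abs_nonneg C) hx
  linarith [Real.add_one_le_exp (v * x), le_abs_self C]

lemma summable_inv_of_eventually_two_mul_le {a : ℕ → ℝ} (ha : ∀ n, 0 < a n)
    (hdouble : ∀ᶠ n in atTop, 2 * a n ≤ a (n + 1)) : Summable fun n ↦ (a n)⁻¹ := by
  refine summable_of_ratio_norm_eventually_le (r := 2⁻¹) (by norm_num) ?_
  filter_upwards [hdouble] with n hn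
  rw [norm_inv, norm_inv, Real.norm_of_nonneg (ha n).le, Real.norm_of_nonneg (ha (n + 1)).le,
    ← mul_inv]
  exact inv_anti₀ (mul_pos two_pos (ha n)) hn

lemma summable_inv_of_exp_sub_le {a v : ℕ → ℝ} {C : ℝ} (ha : ∀ n, 1 ≤ a n)
    (hv : Tendsto v atTop atTop) (hexp : ∀ n, Real.exp (v n * a n) - C ≤ a (n + 1)) :
    Summable fun n ↦ (a n)⁻¹ := by
  refine summable_inv_of_eventually_two_mul_le (fun n ↦ one_pos.trans_le (ha n)) ?_
  filter_upwards [hv.eventually_ge_atTop (2 + |C|)] with n hn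
  exact (two_mul_le_exp_sub (ha n) hn).trans (hexp n)

lemma mul_le_one_add_mul_of_abs_one_div_sub_le {x y D : ℝ} (hx : 0 < x)
    (h : |1 / x - y| ≤ D) : x * y ≤ 1 + D * x :=
  calc x * y ≤ x * (1 / x + D) := by
        gcongr
        linarith [(abs_le.1 h).1]
    _ = 1 + D * x := by field_simp

lemma summable_of_abs_one_div_sub_le {ι : Type*} {x y : ι → ℝ} {D : ℝ}
    (hx : ∀ i, x i ∈ Set.Ioc 0 1) (hy : ∀ i, 0 < y i) (h : ∀ i, |1 / x i - y i| ≤ D)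
    (hsum : Summable fun i ↦ (y i)⁻¹) : Summable x := by
  refine .of_nonneg_of_le (fun i ↦ (hx i).1.le) (fun i ↦ ?_) (hsum.mul_left (1 + D))
  have hD : 0 ≤ D := (abs_nonneg _).trans (h i)
  rw [← div_eq_mul_inv, le_div_iff₀ (hy i)]
  linarith [mul_le_one_add_mul_of_abs_one_div_sub_le (hx i).1 (h i),
    mul_le_of_le_one_right hD (hx i).2]

lemma prod_le_exp_tsum_div_prod {ι : Type*} {x y e : ι → ℝ} (hx : ∀ i, 0 ≤ x i)
    (hy : ∀ i, 0 < y i) (he : ∀ i, 0 ≤ e i) (hsum : Summable e)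
    (hxy : ∀ i, x i * y i ≤ 1 + e i) (s : Finset ι) :
    ∏ i ∈ s, x i ≤ Real.exp (∑' i, e i) / ∏ i ∈ s, y i := by
  rw [le_div_iff₀ (Finset.prod_pos fun i _ ↦ hy i), ← Finset.prod_mul_distrib]
  calc ∏ i ∈ s, x i * y i
      ≤ ∏ i ∈ s, (1 + e i) :=
        Finset.prod_le_prod (fun i _ ↦ mul_nonneg (hx i) (hy i).le) fun i _ ↦ hxy i
    _ ≤ Real.exp (∑ i ∈ s, e i) := Real.prod_one_add_le_exp_sum s he
    _ ≤ Real.exp (∑' i, e i) := Real.exp_le_exp.2 (hsum.sum_le_tsum s fun i _ ↦ he i)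

lemma log_le_add_log_one_add {x y c : ℝ} (hx : 0 < x) (hy : 0 ≤ y) (hc : 0 ≤ c)
    (h : x ≤ Real.exp y + c) : Real.log x ≤ y + Real.log (1 + c) := by
  have hle : x ≤ Real.exp y * (1 + c) := by
    linarith [le_mul_of_one_le_left hc (Real.one_le_exp hy)]
  calc Real.log x ≤ Real.log (Real.exp y * (1 + c)) := Real.log_le_log hx hle
    _ = y + Real.log (1 + c) := by
      rw [Real.log_mul (Real.exp_pos y).ne' (by linarith), Real.log_exp]

lemma mul_mul_le_add_of_le_mul_add {b B x y u l M L : ℝ} (hb : b ∈ Set.Icc 0 1) (hbB : b ≤ B)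
    (hx : 0 ≤ x) (hu : 0 ≤ u) (hM : 0 ≤ M) (hL : 0 ≤ L) (hxy : x * y ≤ M) (hl : l ≤ u * y + L) :
    b * x * l ≤ B * u * M + L * x := by
  obtain ⟨hb_nonneg, hb_le_one⟩ := hb
  calc b * x * l
      ≤ b * x * (u * y + L) := by gcongr
    _ = b * u * (x * y) + b * (L * x) := by ring
    _ ≤ b * u * M + 1 * (L * x) := by gcongr
    _ ≤ B * u * M + L * x := by
        rw [one_mul]
        gcongr

lemma summable_prod_range_mul_log {α a v : ℕ → ℝ} {D L : ℝ} (hα : ∀ n, α n ∈ Set.Ioc 0 1)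
    (ha : ∀ n, 0 < a n) (hαa : ∀ n, |1 / α n - a n| ≤ D) (hsumα : Summable α)
    (hv : ∀ᶠ n in atTop, 0 ≤ v n) (hL : 0 ≤ L)
    (hlog : ∀ᶠ n in atTop, Real.log (1 / α (n + 1)) ≤ v n * a n + L)
    (hsum : Summable fun n ↦ v n / ∏ k ∈ Finset.range n, a k) :
    Summable fun n ↦ (∏ k ∈ Finset.range n, α k) * Real.log (1 / α n) := by
  have hD : 0 ≤ D := (abs_nonneg _).trans (hαa 0)
  have hα_nonneg (n : ℕ) : 0 ≤ α n := (hα n).1.le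
  have hmul (n : ℕ) : α n * a n ≤ 1 + D * α n :=
    mul_le_one_add_mul_of_abs_one_div_sub_le (hα n).1 (hαa n)
  have hmul_le (n : ℕ) : α n * a n ≤ 1 + D :=
    (hmul n).trans (by linarith [mul_le_of_le_one_right hD (hα n).2])
  have hβ_mem (n : ℕ) : ∏ k ∈ Finset.range n, α k ∈ Set.Icc 0 1 :=
    ⟨Finset.prod_nonneg fun k _ ↦ hα_nonneg k,
      Finset.prod_le_one (fun k _ ↦ hα_nonneg k) fun k _ ↦ (hα k).2⟩
  set K := Real.exp (∑' n, D * α n)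
  have hβ_le (n : ℕ) : ∏ k ∈ Finset.range n, α k ≤ K / ∏ k ∈ Finset.range n, a k :=
    prod_le_exp_tsum_div_prod hα_nonneg ha (fun k ↦ mul_nonneg hD (hα_nonneg k))
      (hsumα.mul_left D) hmul _
  have hlog_nonneg (n : ℕ) : 0 ≤ Real.log (1 / α n) :=
    Real.log_nonneg (one_le_one_div (hα n).1 (hα n).2)
  rw [← summable_nat_add_iff 1]
  refine ((hsum.mul_left (K * (1 + D))).add (hsumα.mul_left L)).of_norm_bounded_eventually_nat ?_
  filter_upwards [hv, hlog] with n hvn hlogn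
  rw [Real.norm_of_nonneg (mul_nonneg (hβ_mem _).1 (hlog_nonneg _)), Finset.prod_range_succ]
  refine (mul_mul_le_add_of_le_mul_add (hβ_mem n) (hβ_le n) (hα_nonneg n) hvn (by linarith) hL
    (hmul_le n) hlogn).trans_eq ?_
  ring

theorem spiky_brjuno_sum_converges_general {α a v η : ℕ → ℝ} (hα : ∀ n, α n ∈ Set.Ioc 0 1)
    (ha : ∀ n, 1 ≤ a n) (hαa : ∃ D, ∀ n, |1 / α n - a n| ≤ D) (hv : Tendsto v atTop atTop)
    (hη : ∃ C, ∀ n, |η n| ≤ C) (hform : ∀ n, a (n + 1) = Real.exp (v n * a n) + η n)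
    (hsum : Summable fun n ↦ v (n + 1) / ∏ k ∈ Finset.range (n + 1), a k) :
    Summable fun n ↦ (∏ k ∈ Finset.range n, α k) * Real.log (1 / α n) := by
  obtain ⟨C, hC⟩ := hη
  obtain ⟨D, hD⟩ := hαa
  have hCD : 0 ≤ C + D := add_nonneg ((abs_nonneg _).trans (hC 0)) ((abs_nonneg _).trans (hD 0))
  have ha_pos (n : ℕ) : 0 < a n := one_pos.trans_le (ha n)
  have hsuma : Summable fun n ↦ (a n)⁻¹ :=
    summable_inv_of_exp_sub_le (C := C) ha hv fun n ↦ by linarith [hform n, (abs_le.1 (hC n)).1]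
  have hsumα : Summable α := summable_of_abs_one_div_sub_le hα ha_pos hD hsuma
  have hv_nonneg : ∀ᶠ n in atTop, 0 ≤ v n := hv.eventually_ge_atTop 0
  refine summable_prod_range_mul_log (L := Real.log (1 + (C + D))) hα ha_pos hD hsumα hv_nonneg
    (Real.log_nonneg (by linarith)) ?_ ((summable_nat_add_iff 1).1 hsum)
  filter_upwards [hv_nonneg] with n hvn
  refine log_le_add_log_one_add (one_div_pos.2 (hα _).1) (mul_nonneg hvn (ha_pos n).le) hCD ?_
  linarith [(abs_le.1 (hD (n + 1))).2, (abs_le.1 (hC n)).2, hform n]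

lemma summable_of_tsum_ofReal_ne_top {ι : Type*} {f : ι → ℝ} (hf : ∀ i, 0 ≤ f i)
    (hsum : ∑' i, ENNReal.ofReal (f i) ≠ ⊤) : Summable f :=
  (ENNReal.summable_toReal hsum).congr fun i ↦ ENNReal.toReal_ofReal (hf i)

/-- Any spiky number is of Brjuno type: its Brjuno sum converges. -/
theorem spiky_brjuno_sum_converges
    (α : ℕ → ℝ) (a : ℕ → ℤ) (v η : ℕ → ℝ)
    (hα : ∀ n, α n ∈ Set.Ioo (0:ℝ) (1/2))
    (ha : ∀ n, 2 ≤ a n)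
    (hrec : ∀ n, 1 / α n = (a n : ℝ) - α (n+1))
    (hv : ∀ n, 0 < v n)
    (hvlim : Tendsto v atTop atTop)
    (hη : ∃ C, ∀ n, |η n| ≤ C)
    (hform : ∀ n, ((a (n+1) : ℤ) : ℝ) = Real.exp (v n * (a n : ℝ)) + η n)
    (hsum : ∑' n, ENNReal.ofReal (v (n+1) / ∏ k ∈ Finset.range (n+1), ((a k : ℤ) : ℝ)) ≠ ⊤) :
    ∑' n, ENNReal.ofReal ((∏ k ∈ Finset.range n, α k) * Real.log (1 / α n)) ≠ ⊤ := by
  have ha_one (n : ℕ) : (1 : ℝ) ≤ a n := mod_cast one_le_two.trans (ha n)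
  have hαa (n : ℕ) : |1 / α n - a n| ≤ 1 / 2 := by
    rw [hrec, sub_sub_cancel_left, abs_neg, abs_of_pos (hα _).1]
    exact (hα _).2.le
  have hquot_nonneg (n : ℕ) : 0 ≤ v (n + 1) / ∏ k ∈ Finset.range (n + 1), (a k : ℝ) :=
    div_nonneg (hv _).le (Finset.prod_nonneg fun k _ ↦ zero_le_one.trans (ha_one k))
  exact (spiky_brjuno_sum_converges_general
    (fun n ↦ ⟨(hα n).1, (hα n).2.le.trans one_half_lt_one.le⟩) ha_one ⟨1 / 2, hαa⟩ hvlim hη hform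
    (summable_of_tsum_ofReal_ne_top hquot_nonneg hsum)).tsum_ofReal_ne_top
end

section
/- Let (α_n)_{n≥0} and (a_n)_{n≥0} be sequences with α_n ∈ (0,1/2) and a_n an integer with a_n ≥ 2, satisfying 1/α_n = a_n − α_{n+1} for all n ≥ 0. Suppose there are positive reals (v_n)_{n≥0} with v_n → +∞ and a uniformly bounded sequence of reals (η_n)_{n≥0} such that a_{n+1} = e^{v_n a_n} + η_n for all n ≥ 0. Then there exists n_0 ≥ 0 such that for all n ≥ n_0, 1/α_{n+1} ≥ e^{2/α_n}. -/
open Filter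

/-!
Write `x n` for `1 / α n`. Since `x n = a n + O(1)`, the formula `a (n + 1) = exp (v n * a n) + η n`
gives `x (n + 1) = exp (v n * a n) + O(1)`. As `v n → ∞` and `a n` stays away from `0`, the
exponent `v n * a n` exceeds `K * x n = K * a n + O(1)` by an amount tending to infinity, whatever
the constant `K`. Two exponentials whose exponents drift apart in this way have a difference that
absorbs every bounded error.
-/

section Asymptotics

variable {ι : Type*} {l : Filter ι}

lemma tendsto_exp_sub_exp_atTop {u w : ι → ℝ} (hu : Tendsto u l atTop)
    (huw : Tendsto (fun i => u i - w i) l atTop) :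
    Tendsto (fun i => Real.exp (u i) - Real.exp (w i)) l atTop := by
  have hfactor : Tendsto (fun i => 1 - Real.exp (-(u i - w i))) l (nhds 1) := by
    simpa using (Real.tendsto_exp_neg_atTop_nhds_zero.comp huw).const_sub 1
  refine ((Real.tendsto_exp_atTop.comp hu).atTop_mul_pos one_pos hfactor).congr fun i => ?_
  rw [Function.comp_apply, mul_sub, mul_one, ← Real.exp_add, neg_sub, add_sub_cancel]

variable {𝕜 : Type*} [Field 𝕜] [LinearOrder 𝕜] [IsStrictOrderedRing 𝕜]
  {v a x : ι → 𝕜} {c B : 𝕜}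

lemma tendsto_mul_atTop_of_eventually_const_le (hv : Tendsto v l atTop) (hc : 0 < c)
    (hca : ∀ᶠ i in l, c ≤ a i) : Tendsto (fun i => v i * a i) l atTop := by
  refine tendsto_atTop_mono' l ?_ (hv.atTop_mul_const hc)
  filter_upwards [hv.eventually_ge_atTop 0, hca] with i hvi hcai
  exact mul_le_mul_of_nonneg_left hcai hvi

lemma tendsto_mul_sub_const_mul_atTop (hv : Tendsto v l atTop) (hc : 0 < c)
    (hca : ∀ᶠ i in l, c ≤ a i) (hxa : ∀ᶠ i in l, |x i - a i| ≤ B) (K : 𝕜) :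
    Tendsto (fun i => v i * a i - K * x i) l atTop := by
  have hmain : Tendsto (fun i => (v i - K) * a i) l atTop :=
    tendsto_mul_atTop_of_eventually_const_le
      (by simpa only [sub_eq_add_neg] using tendsto_atTop_add_const_right l (-K) hv) hc hca
  have herror : ∀ᶠ i in l, -(|K| * B) ≤ -(K * (x i - a i)) := by
    filter_upwards [hxa] with i hi
    rw [neg_le_neg_iff]
    calc K * (x i - a i) ≤ |K * (x i - a i)| := le_abs_self _
      _ = |K| * |x i - a i| := abs_mul _ _
      _ ≤ |K| * B := by gcongr
  refine (tendsto_atTop_add_right_of_le' l _ hmain herror).congr fun i => ?_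
  ring

end Asymptotics

theorem spiky_eventually_double_exponential_general {x a v η : ℕ → ℝ} {c : ℝ}
    (hc : 0 < c) (hca : ∀ n, c ≤ a n) (hxa : ∃ B, ∀ n, |x n - a n| ≤ B)
    (hv : Tendsto v atTop atTop) (hη : ∃ C, ∀ n, C ≤ η n)
    (hform : ∀ n, a (n + 1) = Real.exp (v n * a n) + η n) (K : ℝ) :
    ∀ᶠ n in atTop, Real.exp (K * x n) ≤ x (n + 1) := by
  obtain ⟨B, hB⟩ := hxa
  obtain ⟨C, hC⟩ := hη
  have hgap : Tendsto (fun n => Real.exp (v n * a n) - Real.exp (K * x n)) atTop atTop :=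
    tendsto_exp_sub_exp_atTop
      (tendsto_mul_atTop_of_eventually_const_le hv hc (.of_forall hca))
      (tendsto_mul_sub_const_mul_atTop hv hc (.of_forall hca) (.of_forall hB) K)
  filter_upwards [hgap.eventually_ge_atTop (B - C)] with n hn
  calc Real.exp (K * x n) ≤ Real.exp (v n * a n) + C - B := by linarith
    _ ≤ Real.exp (v n * a n) + η n - B := by gcongr; exact hC n
    _ = a (n + 1) - B := by rw [hform]
    _ ≤ x (n + 1) := by linarith [(abs_le.1 (hB (n + 1))).1]

/-- For a spiky number there exists `n₀` such that `1/α_{n+1} ≥ e^{2/α_n}` for all `n ≥ n₀`. -/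
theorem spiky_eventually_double_exponential
    (α : ℕ → ℝ) (a : ℕ → ℤ) (v η : ℕ → ℝ)
    (hα : ∀ n, α n ∈ Set.Ioo (0:ℝ) (1/2))
    (ha : ∀ n, 2 ≤ a n)
    (hrec : ∀ n, 1 / α n = (a n : ℝ) - α (n+1))
    (hv : ∀ n, 0 < v n)
    (hvlim : Tendsto v atTop atTop)
    (hη : ∃ C, ∀ n, |η n| ≤ C)
    (hform : ∀ n, ((a (n+1) : ℤ) : ℝ) = Real.exp (v n * (a n : ℝ)) + η n) :
    ∃ n₀ : ℕ, ∀ n, n₀ ≤ n → Real.exp (2 / α n) ≤ 1 / α (n+1) := by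
  have hquot (n : ℕ) : |1 / α n - a n| ≤ 1 / 2 := by
    rw [hrec, sub_sub_cancel_left, abs_neg, abs_of_pos (hα _).1]
    exact (hα _).2.le
  simpa only [mul_one_div, eventually_atTop] using
    spiky_eventually_double_exponential_general two_pos (fun n => mod_cast ha n) ⟨_, hquot⟩ hvlim
      (hη.imp' Neg.neg fun _ hC n => neg_le_of_abs_le (hC n)) hform 2
end

section
/- Let (α_m)_{m≥0} be a sequence of reals in (0,1/2) and n ≥ 0 an index such that 1/α_{m+1} ≥ e^{2/α_m} for all m ≥ n. Let E(x) = e^x and E_2(x) = 2e^x, and let E^{∘p}, E_2^{∘p} denote p-fold iterates. Then for every p ≥ 1: E^{∘p}(0) < E_2^{∘(p−1)}(2/α_n) ≤ 2/α_{n+p−1} ≤ log(1/α_{n+p}). In particular, E^{∘p}(0) < log(1/α_{n+p}) for all p ≥ 1. -/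
open Filter

/-!
In terms of `u m = 2 / α m` the hypothesis reads `2 * exp (u m) ≤ u (m + 1)`, so `u` grows at least
as fast as the orbit of `u n` under `E₂ x = 2 * exp x`. That orbit stays strictly above the orbit
of `1 = E 0` under `E = exp`, because `E ≤ E₂`, `E` is strictly increasing and `1 < u n`.
-/

lemma iterate_lt_iterate_of_strictMono_of_le {β : Type*} [PartialOrder β] {f g : β → β}
    (hf : StrictMono f) (hfg : f ≤ g) {x y : β} (hxy : x < y) (k : ℕ) :
    f^[k] x < g^[k] y :=
  (hf.iterate k hxy).trans_le (hf.monotone.iterate_le_of_le hfg k y)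

lemma iterate_le_seq_add_of_monotone {β : Type*} [Preorder β] {f : β → β} (hf : Monotone f)
    {u : ℕ → β} {n : ℕ} (hu : ∀ m, n ≤ m → f (u m) ≤ u (m + 1)) (k : ℕ) :
    f^[k] (u n) ≤ u (n + k) :=
  hf.seq_le_seq (x := fun i ↦ f^[i] (u n)) (y := fun i ↦ u (n + i)) k le_rfl
    (fun i _ ↦ (Function.iterate_succ_apply' f i (u n)).le)
    (fun i _ ↦ hu (n + i) (Nat.le_add_right n i))

lemma exp_le_two_mul_exp : Real.exp ≤ fun x ↦ 2 * Real.exp x :=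
  fun x ↦ le_mul_of_one_le_left (Real.exp_pos x).le one_le_two

lemma exp_iterate_succ_zero_lt_two_mul_exp_iterate {x : ℝ} (hx : 1 < x) (k : ℕ) :
    Real.exp^[k + 1] 0 < (fun x ↦ 2 * Real.exp x)^[k] x := by
  rw [Function.iterate_succ_apply, Real.exp_zero]
  exact iterate_lt_iterate_of_strictMono_of_le Real.exp_strictMono exp_le_two_mul_exp hx k

lemma two_mul_exp_iterate_le_two_div {α : ℕ → ℝ} {n : ℕ}
    (h : ∀ m, n ≤ m → Real.exp (2 / α m) ≤ 1 / α (m + 1)) (k : ℕ) :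
    (fun x ↦ 2 * Real.exp x)^[k] (2 / α n) ≤ 2 / α (n + k) := by
  have two_mul_exp_mono : Monotone fun x ↦ 2 * Real.exp x :=
    Real.exp_monotone.const_mul zero_le_two
  refine iterate_le_seq_add_of_monotone two_mul_exp_mono (u := fun m ↦ 2 / α m)
    (fun m hm ↦ ?_) k
  calc 2 * Real.exp (2 / α m) ≤ 2 * (1 / α (m + 1)) := by gcongr; exact h m hm
    _ = 2 / α (m + 1) := mul_one_div _ _

lemma le_log_of_exp_le {x y : ℝ} (h : Real.exp x ≤ y) : x ≤ Real.log y :=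
  (Real.le_log_iff_exp_le ((Real.exp_pos x).trans_le h)).mpr h

theorem iterated_exponential_below_log_general
    (α : ℕ → ℝ) (n : ℕ)
    (hα : α n ∈ Set.Ioo (0 : ℝ) 2)
    (h : ∀ m, n ≤ m → Real.exp (2 / α m) ≤ 1 / α (m + 1)) :
    ∀ p, 1 ≤ p →
      Real.exp^[p] 0 < (fun x ↦ 2 * Real.exp x)^[p - 1] (2 / α n) ∧
      (fun x ↦ 2 * Real.exp x)^[p - 1] (2 / α n) ≤ 2 / α (n + p - 1) ∧
      2 / α (n + p - 1) ≤ Real.log (1 / α (n + p)) := by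
  intro p hp
  obtain ⟨k, rfl⟩ := Nat.exists_eq_add_of_le' hp
  have one_lt : 1 < 2 / α n := (one_lt_div hα.1).mpr hα.2
  exact ⟨exp_iterate_succ_zero_lt_two_mul_exp_iterate one_lt k,
    two_mul_exp_iterate_le_two_div h k,
    le_log_of_exp_le (h (n + k) (Nat.le_add_right n k))⟩

/-- If `1/α_{m+1} ≥ e^{2/α_m}` for all `m ≥ n`, then for every `p ≥ 1`,
`E^{∘p}(0) < E₂^{∘(p-1)}(2/α_n) ≤ 2/α_{n+p-1} ≤ log(1/α_{n+p})`, where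
`E(x) = eˣ` and `E₂(x) = 2eˣ`. -/
theorem iterated_exponential_below_log
    (α : ℕ → ℝ) (n : ℕ)
    (hα : ∀ m, α m ∈ Set.Ioo (0:ℝ) (1/2))
    (h : ∀ m, n ≤ m → Real.exp (2 / α m) ≤ 1 / α (m+1)) :
    ∀ p, 1 ≤ p →
      Real.exp^[p] 0 < (fun x => 2 * Real.exp x)^[p-1] (2 / α n) ∧
      (fun x => 2 * Real.exp x)^[p-1] (2 / α n) ≤ 2 / α (n+p-1) ∧
      2 / α (n+p-1) ≤ Real.log (1 / α (n+p)) :=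
  iterated_exponential_below_log_general α n
    (Set.Ioo_subset_Ioo_right (by norm_num) (hα n)) h
end

section
/- Let (α_n)_{n≥0} and (a_n)_{n≥0} be sequences with α_n ∈ (0,1/2) and a_n an integer with a_n ≥ 2, satisfying 1/α_n = a_n − α_{n+1} for all n ≥ 0. Suppose there are positive reals (v_n)_{n≥0} with v_n → +∞ and a uniformly bounded sequence of reals (η_n)_{n≥0} such that a_{n+1} = e^{v_n a_n} + η_n for all n ≥ 0, and Σ_{n≥1} v_n/(a_0 a_1 ⋯ a_{n−1}) < +∞. Then the sequence (α_n) is not of Herman type: there exists n ≥ 0 such that for every p ≥ 1, h_{α_{n+p−1}} ∘ ⋯ ∘ h_{α_n}(0) < B_{n+p}. -/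
open Filter
open scoped ENNReal

/-- Yoccoz's function `h_α`. -/
noncomputable def hfun (α : ℝ) (y : ℝ) : ℝ :=
  if y ≤ Real.log (1/α) then Real.exp y else (y + 1 - Real.log (1/α)) / α

/-- `hComp α n p = h_{α_{n+p-1}} ∘ ⋯ ∘ h_{α_n}` (identity when `p = 0`). -/
noncomputable def hComp (α : ℕ → ℝ) (n : ℕ) : ℕ → ℝ → ℝ
  | 0, y => y
  | p+1, y => hfun (α (n+p)) (hComp α n p y)

/-- The shifted Brjuno sum `B_m = ∑_{k≥0} (∏_{i<k} α_{m+i}) log(1/α_{m+k})`. -/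
noncomputable def brjunoShift (α : ℕ → ℝ) (m : ℕ) : ℝ≥0∞ :=
  ∑' k, ENNReal.ofReal ((∏ i ∈ Finset.range k, α (m+i)) * Real.log (1 / α (m+k)))

/-!
Since `log (1 / α (n + 1))` is roughly `v n * a n`, `1 / α n` is roughly `a n`, and `v n → ∞`,
eventually `1 / α n ≤ log (1 / α (n + 1))`. From then on an orbit started at `0` stays in the
exponential branch of `h`: if it is below `log (1 / α n)`, its next term is below `1 / α n`, hence
below `log (1 / α (n + 1))`. The latter is the first term of the Brjuno sum, so the orbit never
catches up with that sum.
-/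

lemma hfun_lt_one_div {α y : ℝ} (hα : 0 < α) (hy : y < Real.log (1 / α)) :
    hfun α y < 1 / α := by
  rw [hfun, if_pos hy.le]
  exact (Real.lt_log_iff_exp_lt (one_div_pos.2 hα)).1 hy

lemma ofReal_log_one_div_le_brjunoShift (α : ℕ → ℝ) (m : ℕ) :
    ENNReal.ofReal (Real.log (1 / α m)) ≤ brjunoShift α m := by
  simpa only [Finset.range_zero, Finset.prod_empty, one_mul, add_zero, brjunoShift] using
    ENNReal.le_tsum (f := fun k ↦ ENNReal.ofReal
      ((∏ i ∈ Finset.range k, α (m + i)) * Real.log (1 / α (m + k)))) 0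

lemma log_one_div_pos {x : ℝ} (hx : x ∈ Set.Ioo (0 : ℝ) 1) : 0 < Real.log (1 / x) :=
  Real.log_pos (one_lt_one_div hx.1 hx.2)

section FastDecay

variable {α : ℕ → ℝ} {N : ℕ} (hα : ∀ n, α n ∈ Set.Ioo (0 : ℝ) 1)
  (hdecay : ∀ n, N ≤ n → 1 / α n ≤ Real.log (1 / α (n + 1)))
include hα hdecay

lemma hComp_zero_lt_log_one_div (p : ℕ) : hComp α N p 0 < Real.log (1 / α (N + p)) := by
  induction p with
  | zero => exact log_one_div_pos (hα N)
  | succ p ih =>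
    calc hComp α N (p + 1) 0 = hfun (α (N + p)) (hComp α N p 0) := rfl
      _ < 1 / α (N + p) := hfun_lt_one_div (hα _).1 ih
      _ ≤ Real.log (1 / α (N + (p + 1))) := hdecay _ (Nat.le_add_right N p)

lemma ofReal_hComp_zero_lt_brjunoShift (p : ℕ) :
    ENNReal.ofReal (hComp α N p 0) < brjunoShift α (N + p) :=
  calc ENNReal.ofReal (hComp α N p 0)
      < ENNReal.ofReal (Real.log (1 / α (N + p))) :=
        (ENNReal.ofReal_lt_ofReal_iff (log_one_div_pos (hα _))).2
          (hComp_zero_lt_log_one_div hα hdecay p)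
    _ ≤ brjunoShift α (N + p) := ofReal_log_one_div_le_brjunoShift α _

end FastDecay

lemma exp_add_le_exp_mul {x c v : ℝ} (hx : 1 ≤ x) (hc : 0 ≤ c) (hv : c + 1 ≤ v) :
    Real.exp x + c ≤ Real.exp (v * x) := by
  have hcx : c ≤ (v - 1) * x := by nlinarith
  have hexp : 1 ≤ Real.exp x := Real.one_le_exp (zero_le_one.trans hx)
  calc Real.exp x + c ≤ Real.exp x * (c + 1) := by nlinarith
    _ ≤ Real.exp x * Real.exp ((v - 1) * x) := by
        gcongr
        exact (add_le_add_left hcx 1).trans (Real.add_one_le_exp _)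
    _ = Real.exp (v * x) := by rw [← Real.exp_add]; ring_nf

lemma eventually_one_div_le_log_one_div_succ
    {α a v η : ℕ → ℝ}
    (hα : ∀ n, α n ∈ Set.Ioo (0 : ℝ) 1)
    (hrec : ∀ n, 1 / α n = a n - α (n + 1))
    (hvlim : Tendsto v atTop atTop)
    (hη : BddBelow (Set.range η))
    (hform : ∀ n, a (n + 1) = Real.exp (v n * a n) + η n) :
    ∀ᶠ n in atTop, 1 / α n ≤ Real.log (1 / α (n + 1)) := by
  obtain ⟨b, hb⟩ := hη
  filter_upwards [hvlim.eventually_ge_atTop (|b| + 1 + 1)] with n hvn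
  have hηn : -|b| ≤ η n := (neg_abs_le b).trans (hb (Set.mem_range_self n))
  have h_one_le : 1 ≤ a n := by
    linarith [hrec n, one_lt_one_div (hα n).1 (hα n).2, (hα (n + 1)).1]
  have h_exp_le : Real.exp (a n) ≤ 1 / α (n + 1) := by
    linarith [exp_add_le_exp_mul h_one_le (by positivity) hvn, hform n, hrec (n + 1),
      (hα (n + 2)).2]
  calc 1 / α n ≤ a n := by linarith [hrec n, (hα (n + 1)).1]
    _ ≤ Real.log (1 / α (n + 1)) :=
        (Real.le_log_iff_exp_le (one_div_pos.2 (hα _).1)).2 h_exp_le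

theorem spiky_not_herman_general
    {α a v η : ℕ → ℝ}
    (hα : ∀ n, α n ∈ Set.Ioo (0 : ℝ) 1)
    (hrec : ∀ n, 1 / α n = a n - α (n + 1))
    (hvlim : Tendsto v atTop atTop)
    (hη : BddBelow (Set.range η))
    (hform : ∀ n, a (n + 1) = Real.exp (v n * a n) + η n) :
    ∀ᶠ N in atTop, ∀ p, ENNReal.ofReal (hComp α N p 0) < brjunoShift α (N + p) := by
  have hdecay := eventually_one_div_le_log_one_div_succ hα hrec hvlim hη hform
  filter_upwards [eventually_forall_ge_atTop.2 hdecay] with N hN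
  exact ofReal_hComp_zero_lt_brjunoShift hα hN

/-- Any spiky number is not of Herman type. -/
theorem spiky_not_herman
    (α : ℕ → ℝ) (a : ℕ → ℤ) (v η : ℕ → ℝ)
    (hα : ∀ n, α n ∈ Set.Ioo (0:ℝ) (1/2))
    (ha : ∀ n, 2 ≤ a n)
    (hrec : ∀ n, 1 / α n = (a n : ℝ) - α (n+1))
    (hv : ∀ n, 0 < v n)
    (hvlim : Tendsto v atTop atTop)
    (hη : ∃ C, ∀ n, |η n| ≤ C)
    (hform : ∀ n, ((a (n+1) : ℤ) : ℝ) = Real.exp (v n * (a n : ℝ)) + η n)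
    (hsum : ∑' n, ENNReal.ofReal (v (n+1) / ∏ k ∈ Finset.range (n+1), ((a k : ℤ) : ℝ)) ≠ ⊤) :
    ∃ n : ℕ, ∀ p, 1 ≤ p →
      ENNReal.ofReal (hComp α n p 0) < brjunoShift α (n + p) := by
  obtain ⟨C, hC⟩ := hη
  exact (spiky_not_herman_general
    (fun n ↦ Set.Ioo_subset_Ioo_right one_half_lt_one.le (hα n)) hrec hvlim
    ⟨-C, Set.forall_mem_range.2 fun n ↦ neg_le_of_abs_le (hC n)⟩ hform).exists.imp
    fun _ hN p _ ↦ hN p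
end

section
/- Let (α_n)_{n≥0} be a sequence of reals in (0,1/2) that is of Herman type. Then its Brjuno sum converges: B_0 = Σ_{n≥0} β_{n−1} log(1/α_n) < +∞. -/
open Filter
open scoped ENNReal

/-!
Splitting off the first `p` terms gives `B_m = (finite sum) + α_m ⋯ α_{m+p-1} B_{m+p}`, so the
shifted Brjuno sums of a positive sequence are all finite or all infinite. A single Herman
inequality bounds one of them by a real number.
-/

theorem brjunoShift_eq_sum_add_prod_mul {α : ℕ → ℝ} (hα : ∀ n, 0 ≤ α n) (m p : ℕ) :
    brjunoShift α m =
      ∑ k ∈ Finset.range p,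
          ENNReal.ofReal ((∏ i ∈ Finset.range k, α (m + i)) * Real.log (1 / α (m + k))) +
        ENNReal.ofReal (∏ i ∈ Finset.range p, α (m + i)) * brjunoShift α (m + p) := by
  have shifted_term (k : ℕ) :
      ENNReal.ofReal
          ((∏ i ∈ Finset.range (k + p), α (m + i)) * Real.log (1 / α (m + (k + p)))) =
        ENNReal.ofReal (∏ i ∈ Finset.range p, α (m + i)) *
          ENNReal.ofReal
            ((∏ i ∈ Finset.range k, α (m + p + i)) * Real.log (1 / α (m + p + k))) := by
    rw [← ENNReal.ofReal_mul (Finset.prod_nonneg fun i _ => hα (m + i)), add_comm k p,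
      Finset.prod_range_add, mul_assoc]
    simp only [add_assoc]
  simp only [brjunoShift]
  rw [← ENNReal.summable.sum_add_tsum_nat_add' (k := p), ← ENNReal.tsum_mul_left]
  simp only [shifted_term]

theorem brjunoShift_add_ne_top_iff {α : ℕ → ℝ} (hα : ∀ n, 0 < α n) (m p : ℕ) :
    brjunoShift α (m + p) ≠ ⊤ ↔ brjunoShift α m ≠ ⊤ := by
  have head_ne_top : ∑ k ∈ Finset.range p,
      ENNReal.ofReal ((∏ i ∈ Finset.range k, α (m + i)) * Real.log (1 / α (m + k))) ≠ ⊤ :=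
    ENNReal.sum_ne_top.2 fun _ _ => ENNReal.ofReal_ne_top
  have weight_ne_zero : ENNReal.ofReal (∏ i ∈ Finset.range p, α (m + i)) ≠ 0 :=
    (ENNReal.ofReal_pos.2 (Finset.prod_pos fun i _ => hα (m + i))).ne'
  rw [brjunoShift_eq_sum_add_prod_mul (fun n => (hα n).le) m p, ENNReal.add_ne_top,
    and_iff_right head_ne_top, Ne, Ne, ENNReal.mul_eq_top]
  simp only [weight_ne_zero, ENNReal.ofReal_ne_top, ne_eq, not_false_eq_true, true_and,
    false_and, or_false]

theorem herman_implies_brjuno_general {α : ℕ → ℝ} (hα : ∀ n, 0 < α n)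
    (hherman : ∃ n p, brjunoShift α (n + p) ≤ ENNReal.ofReal (hComp α n p 0)) :
    brjunoShift α 0 ≠ ⊤ := by
  obtain ⟨n, p, hle⟩ := hherman
  have tail_ne_top : brjunoShift α (0 + (n + p)) ≠ ⊤ := by
    rw [zero_add]
    exact ne_top_of_le_ne_top ENNReal.ofReal_ne_top hle
  exact (brjunoShift_add_ne_top_iff hα 0 (n + p)).1 tail_ne_top

/-- Any sequence of Herman type is of Brjuno type: the Brjuno sum converges. -/
theorem herman_implies_brjuno
    (α : ℕ → ℝ)
    (hα : ∀ n, α n ∈ Set.Ioo (0:ℝ) (1/2))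
    (hherman : ∀ n : ℕ, ∃ p, 1 ≤ p ∧
      brjunoShift α (n + p) ≤ ENNReal.ofReal (hComp α n p 0)) :
    brjunoShift α 0 ≠ ⊤ := by
  obtain ⟨p, -, hle⟩ := hherman 0
  exact herman_implies_brjuno_general (fun n => (hα n).1) ⟨0, p, hle⟩
end

section
/- Let Ω ⊆ ℂ be a bounded measurable set of positive area, let U ⊆ ℂ be an open set containing Ω, and let g : U → ℂ be holomorphic and injective. Suppose there are constants 0 < c ≤ C such that c·|x − y| ≤ |g(x) − g(y)| ≤ C·|x − y| for all x, y ∈ Ω. Then for every measurable subset X ⊆ Ω, one has (c/C)² · dens(g(X), g(Ω)) ≤ dens(X, Ω) ≤ (C/c)² · dens(g(X), g(Ω)). -/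
/-!
A `K`-Lipschitz map multiplies `d`-dimensional Hausdorff measure by at most `K ^ d`, and a map with
`L`-Lipschitz inverse divides it by at most `L ^ d`. Bounding the numerator of a ratio of measures
by one of these estimates and the denominator by the other, the ratio changes by at most the
factor `(K * L) ^ d`. On `ℂ`, area is a constant multiple of two-dimensional Hausdorff measure, and
the constant cancels in densities.
-/

open MeasureTheory
open scoped ENNReal

/-- The density of `K` in `Ω`: `area(K ∩ Ω) / area(Ω)`. -/
noncomputable def dens (K Ω : Set ℂ) : ℝ≥0∞ := volume (K ∩ Ω) / volume Ω

open scoped NNReal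

theorem ennreal_div_le_mul_div_of_le_mul {a a' b b' K L : ℝ≥0∞} (ha : a' ≤ K * a) (hb : b ≤ L * b')
    (hb₀ : b ≠ 0) (hb_top : b ≠ ∞) : a' / b' ≤ K * L * (a / b) := by
  have inv_le : b'⁻¹ ≤ L * b⁻¹ :=
    calc b'⁻¹ = b * b⁻¹ * b'⁻¹ := by rw [ENNReal.mul_inv_cancel hb₀ hb_top, one_mul]
      _ ≤ L * b' * b⁻¹ * b'⁻¹ := by gcongr
      _ = L * b⁻¹ * (b' * b'⁻¹) := by ring
      _ ≤ L * b⁻¹ := mul_le_of_le_one_right' (ENNReal.mul_inv_le_one b')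
  calc a' / b' = a' * b'⁻¹ := div_eq_mul_inv a' b'
    _ ≤ K * a * (L * b⁻¹) := mul_le_mul' ha inv_le
    _ = K * L * (a / b) := by rw [div_eq_mul_inv]; ring

section HausdorffMeasure

variable {X Y : Type*} [EMetricSpace X] [MeasurableSpace X] [BorelSpace X]
  [EMetricSpace Y] [MeasurableSpace Y] [BorelSpace Y] {f : X → Y} {A Ω : Set X} {K L : ℝ≥0} {d : ℝ}

theorem hausdorffMeasure_le_image_of_antilipschitzWith_domRestrict
    (hf : AntilipschitzWith L (Ω.domRestrict f)) (hd : 0 ≤ d) (hA : A ⊆ Ω) :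
    μH[d] A ≤ (L : ℝ≥0∞) ^ d * μH[d] (f '' A) := by
  have coe_image : ((↑) : Ω → X) '' ((↑) ⁻¹' A) = A := by
    rw [Subtype.image_preimage_coe, Set.inter_eq_right.2 hA]
  have domRestrict_image : Ω.domRestrict f '' ((↑) ⁻¹' A) = f '' A := by
    rw [Set.domRestrict_eq, Set.image_comp, coe_image]
  calc μH[d] A = μH[d] (((↑) : Ω → X) ⁻¹' A) := by
        rw [← (isometry_subtype_coe (s := Ω)).hausdorffMeasure_image (Or.inl hd), coe_image]
    _ ≤ (L : ℝ≥0∞) ^ d * μH[d] (Ω.domRestrict f '' ((↑) ⁻¹' A)) :=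
        hf.le_hausdorffMeasure_image hd _
    _ = (L : ℝ≥0∞) ^ d * μH[d] (f '' A) := by rw [domRestrict_image]

theorem hausdorffMeasure_image_div_le_div
    (hf : LipschitzOnWith K f Ω) (hf' : AntilipschitzWith L (Ω.domRestrict f)) (hd : 0 ≤ d)
    (hΩ₀ : μH[d] Ω ≠ 0) (hΩ_top : μH[d] Ω ≠ ∞) (hA : A ⊆ Ω) :
    μH[d] (f '' A) / μH[d] (f '' Ω) ≤ ((K * L : ℝ≥0) : ℝ≥0∞) ^ d * (μH[d] A / μH[d] Ω) := by
  rw [ENNReal.coe_mul, ENNReal.mul_rpow_of_nonneg _ _ hd]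
  exact ennreal_div_le_mul_div_of_le_mul ((hf.mono hA).hausdorffMeasure_image_le hd)
    (hausdorffMeasure_le_image_of_antilipschitzWith_domRestrict hf' hd subset_rfl) hΩ₀ hΩ_top

theorem hausdorffMeasure_div_le_image_div
    (hf : LipschitzOnWith K f Ω) (hf' : AntilipschitzWith L (Ω.domRestrict f)) (hd : 0 ≤ d)
    (hΩ₀ : μH[d] Ω ≠ 0) (hΩ_top : μH[d] Ω ≠ ∞) (hA : A ⊆ Ω) :
    μH[d] A / μH[d] Ω ≤
      ((K * L : ℝ≥0) : ℝ≥0∞) ^ d * (μH[d] (f '' A) / μH[d] (f '' Ω)) := by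
  have upper : μH[d] (f '' Ω) ≤ (K : ℝ≥0∞) ^ d * μH[d] Ω := hf.hausdorffMeasure_image_le hd
  have lower : μH[d] Ω ≤ (L : ℝ≥0∞) ^ d * μH[d] (f '' Ω) :=
    hausdorffMeasure_le_image_of_antilipschitzWith_domRestrict hf' hd subset_rfl
  have image_ne_zero : μH[d] (f '' Ω) ≠ 0 := fun h => hΩ₀ (by simpa [h] using lower)
  have image_ne_top : μH[d] (f '' Ω) ≠ ∞ :=
    ne_top_of_le_ne_top
      (ENNReal.mul_ne_top (ENNReal.rpow_ne_top_of_nonneg hd ENNReal.coe_ne_top) hΩ_top) upper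
  rw [mul_comm K, ENNReal.coe_mul, ENNReal.mul_rpow_of_nonneg _ _ hd]
  exact ennreal_div_le_mul_div_of_le_mul
    (hausdorffMeasure_le_image_of_antilipschitzWith_domRestrict hf' hd hA) upper
    image_ne_zero image_ne_top

end HausdorffMeasure

theorem addHaar_div_eq_addHaar_div {G : Type*} [TopologicalSpace G] [AddGroup G]
    [IsTopologicalAddGroup G] [LocallyCompactSpace G] [SecondCountableTopology G]
    [MeasurableSpace G] [BorelSpace G] (μ ν : Measure G) [μ.IsAddHaarMeasure]
    [ν.IsAddHaarMeasure] (A B : Set G) : μ A / μ B = ν A / ν B := by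
  have scale (S : Set G) : μ S = μ.addHaarScalarFactor ν * ν S := by
    conv_lhs => rw [Measure.isAddLeftInvariant_eq_smul μ ν, Measure.smul_apply,
      ENNReal.smul_def, smul_eq_mul]
  have factor_ne_zero : (μ.addHaarScalarFactor ν : ℝ≥0∞) ≠ 0 :=
    ENNReal.coe_ne_zero.2 (Measure.addHaarScalarFactor_pos_of_isAddHaarMeasure μ ν).ne'
  rw [scale A, scale B, ENNReal.mul_div_mul_left _ _ factor_ne_zero ENNReal.coe_ne_top]

instance isAddHaarMeasure_hausdorffMeasure_complex : (μH[2] : Measure ℂ).IsAddHaarMeasure := by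
  simpa only [Complex.finrank_real_complex, Nat.cast_ofNat] using
    isAddHaarMeasure_hausdorffMeasure (E := ℂ)

theorem dens_eq_hausdorffMeasure_div {A B : Set ℂ} (hAB : A ⊆ B) :
    dens A B = μH[2] A / μH[2] B := by
  rw [dens, Set.inter_eq_left.2 hAB, addHaar_div_eq_addHaar_div volume μH[2]]

theorem density_distortion_general {X Y : Type*} [MetricSpace X] [MeasurableSpace X]
    [BorelSpace X] [MetricSpace Y] [MeasurableSpace Y] [BorelSpace Y] {f : X → Y}
    {A Ω : Set X} {c C d : ℝ} (hc : 0 < c) (hC : 0 < C)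
    (hf : ∀ x ∈ Ω, ∀ y ∈ Ω,
      c * dist x y ≤ dist (f x) (f y) ∧ dist (f x) (f y) ≤ C * dist x y)
    (hd : 0 ≤ d) (hΩ₀ : μH[d] Ω ≠ 0) (hΩ_top : μH[d] Ω ≠ ∞) (hA : A ⊆ Ω) :
    ENNReal.ofReal ((c / C) ^ d) * (μH[d] (f '' A) / μH[d] (f '' Ω)) ≤ μH[d] A / μH[d] Ω ∧
      μH[d] A / μH[d] Ω ≤
        ENNReal.ofReal ((C / c) ^ d) * (μH[d] (f '' A) / μH[d] (f '' Ω)) := by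
  lift c to ℝ≥0 using hc.le
  lift C to ℝ≥0 using hC.le
  have lipschitz : LipschitzOnWith C f Ω :=
    LipschitzOnWith.of_dist_le_mul fun x hx y hy => (hf x hx y hy).2
  have antilipschitz : AntilipschitzWith c⁻¹ (Ω.domRestrict f) :=
    AntilipschitzWith.of_le_mul_dist fun x y => by
      rw [NNReal.coe_inv, ← div_eq_inv_mul, le_div_iff₀' hc]
      exact (hf x x.2 y y.2).1
  have factor : ((C * c⁻¹ : ℝ≥0) : ℝ≥0∞) ^ d = ENNReal.ofReal ((C / c : ℝ) ^ d) := by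
    rw [← ENNReal.ofReal_rpow_of_pos (by positivity), ← div_eq_mul_inv, ← NNReal.coe_div,
      ENNReal.ofReal_coe_nnreal]
  have factor_inv : ENNReal.ofReal ((c / C : ℝ) ^ d) = (ENNReal.ofReal ((C / c : ℝ) ^ d))⁻¹ := by
    rw [← inv_div, Real.inv_rpow (by positivity), ENNReal.ofReal_inv_of_pos (by positivity)]
  constructor
  · rw [factor_inv, ENNReal.inv_mul_le_iff
      (ENNReal.ofReal_pos.2 (by positivity)).ne' ENNReal.ofReal_ne_top, ← factor]
    exact hausdorffMeasure_image_div_le_div lipschitz antilipschitz hd hΩ₀ hΩ_top hA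
  · rw [← factor]
    exact hausdorffMeasure_div_le_image_div lipschitz antilipschitz hd hΩ₀ hΩ_top hA

/-- If `g` is holomorphic and injective on an open neighbourhood of a bounded
measurable set `Ω` of positive area, and bi-Lipschitz with constants `c ≤ C` on
`Ω`, then densities are distorted by at most `(C/c)²`. -/
theorem density_distortion
    (Ω U : Set ℂ) (g : ℂ → ℂ) (c C : ℝ)
    (hΩmeas : MeasurableSet Ω)
    (hΩbdd : Bornology.IsBounded Ω)
    (hΩpos : 0 < volume Ω)
    (hU : IsOpen U) (hΩU : Ω ⊆ U)
    (hg : DifferentiableOn ℂ g U)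
    (hinj : Set.InjOn g U)
    (hc : 0 < c) (hcC : c ≤ C)
    (hbi : ∀ x ∈ Ω, ∀ y ∈ Ω,
      c * dist x y ≤ dist (g x) (g y) ∧ dist (g x) (g y) ≤ C * dist x y) :
    ∀ X : Set ℂ, X ⊆ Ω → MeasurableSet X →
      ENNReal.ofReal ((c/C)^2) * dens (g '' X) (g '' Ω) ≤ dens X Ω ∧
      dens X Ω ≤ ENNReal.ofReal ((C/c)^2) * dens (g '' X) (g '' Ω) := by
  intro X hXΩ _
  have hΩ₀ : μH[2] Ω ≠ 0 := fun h =>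
    hΩpos.ne' (Measure.absolutelyContinuous_isAddHaarMeasure volume μH[2] h)
  rw [dens_eq_hausdorffMeasure_div hXΩ, dens_eq_hausdorffMeasure_div (Set.image_mono hXΩ)]
  simpa only [Real.rpow_ofNat] using density_distortion_general hc (hc.trans_le hcC) hbi
    zero_le_two hΩ₀ hΩbdd.measure_lt_top.ne hXΩ
end
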